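/- arXiv:2112.08042 — 2 statements merged into one kernel-verified Lean document; each statement's English description precedes it below -/
import Mathlib

section
/- For every integer n ≥ 2, the function f_n admits exactly one fixed point α_n in the open interval (0,1) (i.e. exactly one t ∈ (0,1) with f_n(t) = t), and moreover α_n < 1/2. -/
open Real Filter Finset

/-- `f n t = ∑_{k, 0 ≤ 2k ≤ n} C(n,2k)·C(2k,k)·((1−t)/2)^{2k}·t^{n−2k}` -/
noncomputable def f (n : ℕ) (t : ℝ) : ℝ :=
  ∑ k ∈ Finset.range (n / 2 + 1),
    (n.choose (2 * k) : ℝ) * ((2 * k).choose k : ℝ) * ((1 - t) / 2) ^ (2 * k) * t ^ (n - 2 * k)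

lemma sum_even_aux (g : ℕ → ℝ) (hg : ∀ k, g (2 * k + 1) = 0) (k : ℕ) :
    ∑ m ∈ Finset.range (2 * k + 1), g m = ∑ j ∈ Finset.range (k + 1), g (2 * j) := by
  induction k with
  | zero => simp
  | succ k ih =>
    rw [Finset.sum_range_succ _ (k + 1), ← ih, show 2 * (k + 1) + 1 = 2 * k + 1 + 1 + 1 by ring,
      Finset.sum_range_succ, Finset.sum_range_succ, hg]
    ring_nf

lemma sum_even (g : ℕ → ℝ) (hg : ∀ k, g (2 * k + 1) = 0) (n : ℕ) :
    ∑ m ∈ Finset.range (n + 1), g m = ∑ j ∈ Finset.range (n / 2 + 1), g (2 * j) := by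
  rcases Nat.even_or_odd' n with ⟨k, rfl | rfl⟩
  · rw [sum_even_aux g hg, show 2 * k / 2 = k by omega]
  · rw [Finset.sum_range_succ, hg, sum_even_aux g hg, show (2 * k + 1) / 2 = k by omega, add_zero]

lemma cos_moment_odd (k : ℕ) : ∫ x in (0:ℝ)..π, cos x ^ (2 * k + 1) = 0 := by
  induction k with
  | zero => simp
  | succ k ih =>
    rw [show 2 * (k + 1) + 1 = (2 * k + 1) + 2 by ring, integral_cos_pow, ih]
    simp

lemma cos_moment_even (k : ℕ) :
    ∫ x in (0:ℝ)..π, cos x ^ (2 * k) = π * (((2 * k).choose k : ℝ) / 2 ^ (2 * k)) := by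
  induction k with
  | zero => simp
  | succ k ih =>
    rw [show 2 * (k + 1) = (2 * k) + 2 by ring, integral_cos_pow, ih]
    have h := Nat.succ_mul_centralBinom_succ k
    simp only [Nat.centralBinom] at h
    have h' : ((k:ℝ) + 1) * ((2 * k + 2).choose (k + 1) : ℝ)
        = 2 * (2 * k + 1) * ((2 * k).choose k : ℝ) := by exact_mod_cast h
    have hk : (k:ℝ) + 1 ≠ 0 := by positivity
    have h2 : ((2 * k + 2).choose (k + 1) : ℝ)
        = 2 * (2 * k + 1) * ((2 * k).choose k : ℝ) / (k + 1) := by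
      rw [eq_div_iff hk, ← h']; ring
    rw [h2]
    simp only [sin_pi, sin_zero, mul_zero, sub_zero, zero_div, zero_add]
    push_cast
    rw [pow_add]
    field_simp

lemma f_integral (n : ℕ) (t : ℝ) :
    ∫ x in (0:ℝ)..π, (t + (1 - t) * cos x) ^ n = π * f n t := by
  have h1 : ∀ x : ℝ, (t + (1 - t) * cos x) ^ n = ∑ m ∈ Finset.range (n + 1),
      ((1 - t) ^ m * t ^ (n - m) * (n.choose m : ℝ)) * cos x ^ m := by
    intro x
    rw [add_comm, add_pow]
    refine Finset.sum_congr rfl fun m _ => ?_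
    rw [mul_pow]; ring
  simp_rw [h1]
  rw [intervalIntegral.integral_finsetSum]
  · simp_rw [intervalIntegral.integral_const_mul]
    rw [sum_even _ (by intro k; rw [cos_moment_odd, mul_zero]), f, Finset.mul_sum]
    refine Finset.sum_congr rfl fun k _ => ?_
    rw [cos_moment_even, div_pow]
    ring
  · intro i _
    apply Continuous.intervalIntegrable
    fun_prop

noncomputable def F (n m : ℕ) (t : ℝ) : ℝ :=
  ∫ x in (0:ℝ)..π, (t + (1 - t) * cos x) ^ n * (1 - cos x) ^ m

lemma F_strictConvex (n m : ℕ) (hn : Even n) (h0 : n ≠ 0) :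
    StrictConvexOn ℝ Set.univ (F n m) := by
  refine ⟨convex_univ, ?_⟩
  intro x _ y _ hxy a b ha hb hab
  have hpow := hn.strictConvexOn_pow h0
  simp only [F, smul_eq_mul]
  rw [← intervalIntegral.integral_const_mul, ← intervalIntegral.integral_const_mul,
    ← intervalIntegral.integral_add
      (Continuous.intervalIntegrable (by fun_prop) _ _)
      (Continuous.intervalIntegrable (by fun_prop) _ _)]
  have key : ∀ c : ℝ, (a * x + b * y + (1 - (a * x + b * y)) * c)
      = a * (x + (1 - x) * c) + b * (y + (1 - y) * c) := by
    intro c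
    have : b = 1 - a := by linarith
    subst this; ring
  apply intervalIntegral.integral_lt_integral_of_continuousOn_of_le_of_exists_lt pi_pos
    (by fun_prop) (by fun_prop)
  · intro θ _
    rw [key]
    have h := hpow.convexOn.2 (Set.mem_univ (x + (1 - x) * cos θ))
      (Set.mem_univ (y + (1 - y) * cos θ)) ha.le hb.le hab
    simp only [smul_eq_mul] at h
    have hw : 0 ≤ (1 - cos θ) ^ m := pow_nonneg (by linarith [cos_le_one θ]) m
    nlinarith [mul_le_mul_of_nonneg_right h hw]
  · refine ⟨π / 2, ⟨by positivity, by linarith [pi_pos]⟩, ?_⟩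
    have h := hpow.2 (Set.mem_univ x) (Set.mem_univ y) hxy ha hb hab
    simpa using h

lemma F_hasDeriv (n : ℕ) (t : ℝ) (ht : t ∈ Set.Ioo (0:ℝ) 1) :
    HasDerivAt (F (n + 1) 0) ((n + 1) * F n 1 t) t := by
  have := (intervalIntegral.hasDerivAt_integral_of_dominated_loc_of_deriv_le
    (μ := MeasureTheory.volume) (a := 0) (b := π) (x₀ := t) (s := Set.Ioo (0:ℝ) 1)
    (F := fun t x => (t + (1 - t) * cos x) ^ (n + 1) * (1 - cos x) ^ 0)
    (F' := fun t x => ((n:ℝ) + 1) * ((t + (1 - t) * cos x) ^ n * (1 - cos x) ^ 1))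
    (bound := fun _ => ((n:ℝ) + 1) * 2) (Ioo_mem_nhds ht.1 ht.2)
    (Eventually.of_forall fun s => (Continuous.aestronglyMeasurable (by fun_prop)))
    (Continuous.intervalIntegrable (by fun_prop) _ _)
    (Continuous.aestronglyMeasurable (by fun_prop))
    (Eventually.of_forall ?_)
    (Continuous.intervalIntegrable (by fun_prop) _ _)
    (Eventually.of_forall ?_)).2
  · rw [intervalIntegral.integral_const_mul] at this
    exact this
  · intro x _ s hs
    have h1 := neg_one_le_cos x
    have h2 := cos_le_one x
    rw [norm_mul, norm_mul, norm_pow, pow_one]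
    have e1 : ‖(n:ℝ) + 1‖ = n + 1 := by rw [norm_of_nonneg]; positivity
    have e2 : ‖s + (1 - s) * cos x‖ ^ n ≤ 1 := by
      apply pow_le_one₀ (norm_nonneg _)
      rw [norm_eq_abs, abs_le]
      constructor <;> nlinarith [hs.1, hs.2]
    have e3 : ‖1 - cos x‖ ≤ 2 := by
      rw [norm_eq_abs, abs_le]; constructor <;> linarith
    rw [e1]
    have : ‖s + (1 - s) * cos x‖ ^ n * ‖1 - cos x‖ ≤ 1 * 2 :=
      mul_le_mul e2 e3 (norm_nonneg _) zero_le_one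
    gcongr
    linarith
  · intro x _ s _
    have h : HasDerivAt (fun s : ℝ => s + (1 - s) * cos x) (1 + (0 - 1) * cos x) s :=
      (hasDerivAt_id s).add (((hasDerivAt_const s (1:ℝ)).sub (hasDerivAt_id s)).mul_const _)
    have h3 := (h.pow (n + 1)).mul_const ((1 - cos x) ^ 0)
    have e : ((n + 1 : ℕ) : ℝ) * (s + (1 - s) * cos x) ^ (n + 1 - 1) * (1 + (0 - 1) * cos x) *
        (1 - cos x) ^ 0 = ((n:ℝ) + 1) * ((s + (1 - s) * cos x) ^ n * (1 - cos x) ^ 1) := by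
      rw [Nat.add_sub_cancel]
      push_cast
      ring
    rw [e] at h3
    exact h3

lemma f_cont (n : ℕ) : Continuous (f n) := by
  unfold f; fun_prop

lemma F_eq (n : ℕ) (t : ℝ) : F n 0 t = π * f n t := by
  rw [← f_integral]; simp [F]

lemma f_one (n : ℕ) : f n 1 = 1 := by
  have := f_integral n 1
  simp at this
  have h := pi_ne_zero
  field_simp at this
  linarith

lemma f_half (n : ℕ) (hn : 2 ≤ n) : f n (1 / 2) < 1 / 2 := by
  have h2 : f 2 (1 / 2) = 3 / 8 := by
    norm_num [f, Finset.sum_range_succ, Nat.choose]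
  have h : π * f n (1 / 2) ≤ π * f 2 (1 / 2) := by
    rw [← f_integral, ← f_integral]
    apply intervalIntegral.integral_mono_on pi_pos.le
      (Continuous.intervalIntegrable (by fun_prop) _ _)
      (Continuous.intervalIntegrable (by fun_prop) _ _)
    intro x _
    have h1 := neg_one_le_cos x
    have h2 := cos_le_one x
    exact pow_le_pow_of_le_one (by linarith) (by linarith) hn
  have := le_of_mul_le_mul_left h pi_pos
  linarith

lemma f_ge_term (n k : ℕ) (hk : k ≤ n / 2) (t : ℝ) (h0 : 0 ≤ t) (h1 : t ≤ 1) :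
    (n.choose (2 * k) : ℝ) * ((2 * k).choose k : ℝ) * ((1 - t) / 2) ^ (2 * k) * t ^ (n - 2 * k)
      ≤ f n t := by
  unfold f
  refine Finset.single_le_sum (f := fun k => (n.choose (2 * k) : ℝ) * ((2 * k).choose k : ℝ) *
    ((1 - t) / 2) ^ (2 * k) * t ^ (n - 2 * k)) ?_ (Finset.mem_range.2 (by omega))
  intro i _
  have : 0 ≤ (1 - t) / 2 := by linarith
  positivity

lemma f_small (n : ℕ) (hn : 2 ≤ n) : ∃ t ∈ Set.Ioo (0:ℝ) (1 / 2), t < f n t := by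
  have hI : Set.Ioo (0:ℝ) (1 / 2) ∈ nhdsWithin (0:ℝ) (Set.Ioi 0) :=
    Ioo_mem_nhdsGT (by norm_num)
  rcases Nat.even_or_odd' n with ⟨k, rfl | rfl⟩
  · have hpos : (0:ℝ) < f (2 * k) 0 := by
      have h := f_ge_term (2 * k) k (by omega) 0 le_rfl zero_le_one
      refine lt_of_lt_of_le ?_ h
      have : 0 < (2 * k).choose k := Nat.choose_pos (by omega)
      simp [this]
    have hc : ContinuousAt (fun t => f (2 * k) t - t) 0 :=
      ((f_cont _).sub continuous_id).continuousAt
    have he : ∀ᶠ t in nhds (0:ℝ), 0 < f (2 * k) t - t :=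
      hc.eventually (lt_mem_nhds (by simpa using hpos))
    obtain ⟨t, h1, h2⟩ := ((he.filter_mono nhdsWithin_le_nhds).and hI).exists
    exact ⟨t, h2, by linarith⟩
  · set g : ℝ → ℝ := fun t => (2 * k + 1) * ((2 * k).choose k : ℝ) * ((1 - t) / 2) ^ (2 * k)
    have hg0 : 1 < g 0 := by
      have hb := Nat.four_pow_le_two_mul_self_mul_centralBinom k (by omega)
      have hp := Nat.centralBinom_pos k
      have hlt : 4 ^ k < (2 * k + 1) * (2 * k).choose k := by
        rw [Nat.centralBinom] at hb hp
        nlinarith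
      have hlt' : (4:ℝ) ^ k < (2 * k + 1) * ((2 * k).choose k : ℝ) := by exact_mod_cast hlt
      have h4 : (0:ℝ) < 4 ^ k := by positivity
      simp only [g, sub_zero]
      rw [pow_mul, show ((1:ℝ) / 2) ^ 2 = 1 / 4 by norm_num, div_pow, one_pow, mul_one_div,
        lt_div_iff₀ h4]
      linarith
    have hc : ContinuousAt g 0 := by
      apply Continuous.continuousAt; fun_prop
    have he : ∀ᶠ t in nhds (0:ℝ), 1 < g t := hc.eventually (lt_mem_nhds hg0)
    obtain ⟨t, h1, h2⟩ := ((he.filter_mono nhdsWithin_le_nhds).and hI).exists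
    refine ⟨t, h2, ?_⟩
    have h := f_ge_term (2 * k + 1) k (by omega) t h2.1.le (by linarith [h2.2])
    rw [show 2 * k + 1 - 2 * k = 1 by omega, Nat.choose_succ_self_right] at h
    refine lt_of_lt_of_le ?_ h
    have : 1 * t < g t * t := mul_lt_mul_of_pos_right h1 h2.1
    simp only [g] at this
    push_cast
    linarith

lemma no_three (G : ℝ → ℝ) (hG : StrictConvexOn ℝ Set.univ G) (p q x y z : ℝ)
    (hxy : x < y) (hyz : y < z) (hx : G x = p * x + q) (hy : G y = p * y + q)
    (hz : G z = p * z + q) : False := by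
  have h := hG.slope_strict_mono_adjacent (Set.mem_univ x) (Set.mem_univ z) hxy hyz
  rw [hx, hy, hz, show p * y + q - (p * x + q) = p * (y - x) by ring,
    show p * z + q - (p * y + q) = p * (z - y) by ring,
    mul_div_cancel_right₀ _ (sub_pos.2 hxy).ne', mul_div_cancel_right₀ _ (sub_pos.2 hyz).ne'] at h
  exact lt_irrefl _ h

lemma no_two (n : ℕ) (hn : 2 ≤ n) (a b : ℝ) (ha : 0 < a) (hab : a < b) (hb : b < 1)
    (hfa : f n a = a) (hfb : f n b = b) : False := by
  rcases Nat.even_or_odd' n with ⟨k, rfl | rfl⟩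
  · refine no_three _ (F_strictConvex (2 * k) 0 ⟨k, by ring⟩ (by omega)) π 0 a b 1 hab hb
      ?_ ?_ ?_ <;> simp [F_eq, hfa, hfb, f_one]
  · have hf0 : f (2 * k + 1) 0 = 0 := by
      unfold f
      apply Finset.sum_eq_zero
      intro i hi
      rw [Finset.mem_range] at hi
      rw [zero_pow (by omega), mul_zero]
    have hrolle : ∀ u v : ℝ, 0 ≤ u → v ≤ 1 → u < v → f (2 * k + 1) u = u →
        f (2 * k + 1) v = v → ∃ c, u < c ∧ c < v ∧ F (2 * k) 1 c = π / (2 * k + 1) := by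
      intro u v hu hv huv hfu hfv
      obtain ⟨c, hc, hc'⟩ := exists_hasDerivAt_eq_slope (F (2 * k + 1) 0)
        (fun t => ((2 * k : ℕ) + 1) * F (2 * k) 1 t) huv
        (by
          have : F (2 * k + 1) 0 = fun t => π * f (2 * k + 1) t := funext (F_eq _)
          rw [this]
          exact (continuous_const.mul (f_cont _)).continuousOn)
        (fun t ht => F_hasDeriv (2 * k) t ⟨by linarith [ht.1], by linarith [ht.2]⟩)
      refine ⟨c, hc.1, hc.2, ?_⟩
      rw [F_eq, F_eq, hfu, hfv, ← mul_sub, mul_div_cancel_right₀ _ (sub_pos.2 huv).ne'] at hc'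
      push_cast at hc'
      rw [eq_div_iff (by positivity)]
      linarith
    obtain ⟨x, hx1, hx2, hx⟩ := hrolle 0 a le_rfl (by linarith) ha hf0 hfa
    obtain ⟨y, hy1, hy2, hy⟩ := hrolle a b ha.le hb.le hab hfa hfb
    obtain ⟨z, hz1, hz2, hz⟩ := hrolle b 1 (by linarith) le_rfl hb hfb (f_one _)
    exact no_three _ (F_strictConvex (2 * k) 1 ⟨k, by ring⟩ (by omega)) 0 (π / (2 * k + 1))
      x y z (by linarith) (by linarith) (by rw [hx]; ring) (by rw [hy]; ring) (by rw [hz]; ring)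

theorem stmt_2 (n : ℕ) (hn : 2 ≤ n) :
    ∃ α : ℝ, α ∈ Set.Ioo (0 : ℝ) 1 ∧ f n α = α ∧ α < 1 / 2 ∧
      ∀ t ∈ Set.Ioo (0 : ℝ) 1, f n t = t → t = α := by
  obtain ⟨s, hs, hfs⟩ := f_small n hn
  have hh := f_half n hn
  obtain ⟨α, hα, hfα⟩ := intermediate_value_Ioo' (f := fun t => f n t - t) hs.2.le
    ((f_cont n).sub continuous_id).continuousOn
    (show (0:ℝ) ∈ Set.Ioo _ _ from ⟨by linarith, by linarith⟩)
  have hfα' : f n α = α := by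
    have : f n α - α = 0 := hfα
    linarith
  have h0 : 0 < α := by linarith [hs.1, hα.1]
  have h1 : α < 1 := by linarith [hα.2]
  refine ⟨α, ⟨h0, h1⟩, hfα', hα.2, ?_⟩
  intro t ht hft
  rcases lt_trichotomy t α with h | h | h
  · exact (no_two n hn t α ht.1 h h1 hft hfα').elim
  · exact h
  · exact (no_two n hn α t h0 h ht.2 hfα' hft).elim
end

section
/- For every integer n ≥ 536, one has 1/√(2π(n + 1/4)) < ξ_{4n} ≤ α_n, where ξ_{4n} = 2^{−4n}·C(4n,2n) and α_n is the unique fixed point of f_n in (0,1). -/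
open Real Filter Finset

/-- the normalized central binomial coefficient -/
noncomputable def cb (k : ℕ) : ℝ := ((2 * k).choose k : ℝ) / 4 ^ k

lemma cb_pos (k : ℕ) : 0 < cb k := by
  unfold cb
  have : 0 < (2 * k).choose k := Nat.choose_pos (by omega)
  positivity

lemma cb_succ (k : ℕ) : cb (k + 1) * (2 * k + 2) = cb k * (2 * k + 1) := by
  have h := Nat.succ_mul_centralBinom_succ k
  simp only [Nat.centralBinom] at h
  have h' : ((k : ℝ) + 1) * ((2 * (k + 1)).choose (k + 1) : ℝ)
      = 2 * (2 * k + 1) * ((2 * k).choose k : ℝ) := by exact_mod_cast h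
  unfold cb
  rw [pow_succ]
  field_simp
  linarith

lemma cb_le_one (k : ℕ) : cb k ≤ 1 := by
  induction k with
  | zero => simp [cb]
  | succ k ih =>
    have h := cb_succ k
    have hp := cb_pos k
    have hk : (0 : ℝ) ≤ k := by positivity
    nlinarith

lemma wallis_cb (k : ℕ) : Real.Wallis.W k * (cb k) ^ 2 * (2 * k + 1) = 1 := by
  induction k with
  | zero => simp [cb, Real.Wallis.W]
  | succ k ih =>
    have h := cb_succ k
    have h2 : cb (k + 1) = cb k * (2 * k + 1) / (2 * k + 2) := by
      field_simp
      linarith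
    rw [Real.Wallis.W_succ, h2]
    refine Eq.trans ?_ ih
    push_cast
    field_simp
    ring

lemma cb_sq_ge (k : ℕ) : 2 / (π * (2 * k + 1)) < cb k ^ 2 := by
  have h := wallis_cb k
  have h1 : Real.Wallis.W k < π / 2 := by
    refine lt_of_lt_of_le ?_ (Real.Wallis.W_le (k + 1))
    rw [Real.Wallis.W_succ]
    have := Real.Wallis.W_pos k
    have h3 : (1 : ℝ) < (2 * k + 2) / (2 * k + 1) * ((2 * k + 2) / (2 * k + 3)) := by
      rw [div_mul_div_comm, lt_div_iff₀ (by positivity)]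
      nlinarith
    nlinarith
  have hp := pow_pos (cb_pos k) 2
  rw [div_lt_iff₀ (by positivity)]
  have : 0 < cb k ^ 2 * (2 * k + 1) := by positivity
  nlinarith

lemma cb_sq_le (k : ℕ) (hk : 0 < k) : cb k ^ 2 ≤ 1 / (π * k) := by
  have h := wallis_cb k
  have h1 := Real.Wallis.le_W k
  have hp := pow_pos (cb_pos k) 2
  have hk' : (0 : ℝ) < k := by exact_mod_cast hk
  have hpi := Real.pi_pos
  have h2 : ((2 : ℝ) * k) / (2 * k + 1) ≤ (2 * k + 1) / (2 * k + 2) := by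
    rw [div_le_div_iff₀ (by positivity) (by positivity)]
    nlinarith
  have h3 : ((2 : ℝ) * k) / (2 * k + 1) * (π / 2) ≤ Real.Wallis.W k :=
    le_trans (mul_le_mul_of_nonneg_right h2 (by positivity)) h1
  have h4 : ((2 : ℝ) * k) / (2 * k + 1) * (π / 2) * (cb k ^ 2 * (2 * k + 1)) ≤ 1 := by
    have h6 : 0 ≤ cb k ^ 2 * (2 * (k : ℝ) + 1) := by positivity
    have h7 := mul_le_mul_of_nonneg_right h3 h6
    linarith
  have h5 : ((2 : ℝ) * k) / (2 * k + 1) * (π / 2) * (cb k ^ 2 * (2 * k + 1))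
      = cb k ^ 2 * (π * k) := by
    field_simp
  rw [le_div_iff₀ (by positivity)]
  linarith

lemma even_sum (g : ℕ → ℝ) (n : ℕ) :
    ∑ k ∈ Finset.range (n / 2 + 1), g (2 * k)
      = ∑ j ∈ Finset.range (n + 1), g j * (1 + (-1) ^ j) / 2 := by
  induction n with
  | zero => norm_num
  | succ n ih =>
    rw [Finset.sum_range_succ _ (n + 1), ← ih]
    rcases Nat.even_or_odd' n with ⟨m, rfl | rfl⟩
    · have h1 : (2 * m + 1) / 2 = 2 * m / 2 := by omega
      rw [h1]
      simp [pow_succ, pow_mul]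
    · have h1 : (2 * m + 1 + 1) / 2 + 1 = ((2 * m + 1) / 2 + 1) + 1 := by omega
      have h2 : 2 * ((2 * m + 1) / 2 + 1) = 2 * m + 1 + 1 := by omega
      rw [h1, Finset.sum_range_succ, h2]
      simp [pow_succ, pow_mul]
      ring

lemma mean_sum (m : ℕ) (x y : ℝ) :
    ∑ j ∈ Finset.range (m + 1 + 1), (j : ℝ) * (((m + 1).choose j : ℝ) * x ^ j * y ^ (m + 1 - j))
      = (m + 1) * x * (x + y) ^ m := by
  rw [Finset.sum_range_succ', add_pow, Finset.mul_sum]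
  simp only [Nat.cast_zero, zero_mul, add_zero]
  refine Finset.sum_congr rfl fun i _ => ?_
  have h : ((m : ℝ) + 1) * (m.choose i : ℝ) = ((m + 1).choose (i + 1) : ℝ) * (i + 1) := by
    exact_mod_cast Nat.add_one_mul_choose_eq m i
  have h2 : m + 1 - (i + 1) = m - i := by omega
  rw [h2]
  push_cast
  linear_combination (-(x ^ (i + 1) * y ^ (m - i))) * h

/-- binomial weights -/
noncomputable def wt (n : ℕ) (t : ℝ) (j : ℕ) : ℝ := (n.choose j : ℝ) * (1 - t) ^ j * t ^ (n - j)

lemma f_eq (n : ℕ) (t : ℝ) :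
    f n t = ∑ k ∈ Finset.range (n / 2 + 1), cb k * wt n t (2 * k) := by
  unfold f cb wt
  refine Finset.sum_congr rfl fun k _ => ?_
  have : (2 : ℝ) ^ (2 * k) = 4 ^ k := by rw [pow_mul]; norm_num
  rw [div_pow, this]
  ring

lemma wt_sum (n : ℕ) (t : ℝ) :
    ∑ k ∈ Finset.range (n / 2 + 1), wt n t (2 * k) = (1 + (2 * t - 1) ^ n) / 2 := by
  rw [even_sum]
  have h1 : ∑ j ∈ Finset.range (n + 1), wt n t j = 1 := by
    have := add_pow (1 - t) t n
    rw [show 1 - t + t = 1 by ring, one_pow] at this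
    rw [this]
    refine Finset.sum_congr rfl fun j _ => ?_
    unfold wt; ring
  have h2 : ∑ j ∈ Finset.range (n + 1), wt n t j * (-1) ^ j = (2 * t - 1) ^ n := by
    have := add_pow (-(1 - t)) t n
    rw [show -(1 - t) + t = 2 * t - 1 by ring] at this
    rw [this]
    refine Finset.sum_congr rfl fun j _ => ?_
    unfold wt; rw [neg_pow (1 - t)]; ring
  rw [← Finset.sum_div, ← h2]
  have h3 : (1 : ℝ) + ∑ j ∈ Finset.range (n + 1), wt n t j * (-1) ^ j
      = ∑ j ∈ Finset.range (n + 1), wt n t j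
        + ∑ j ∈ Finset.range (n + 1), wt n t j * (-1) ^ j := by rw [h1]
  rw [h3, ← Finset.sum_add_distrib]
  congr 1
  exact Finset.sum_congr rfl fun j _ => by ring

lemma wt_mean (m : ℕ) (t : ℝ) :
    ∑ k ∈ Finset.range ((m + 1) / 2 + 1), (2 * (k : ℝ)) * wt (m + 1) t (2 * k)
      = (m + 1) * (1 - t) * (1 - (2 * t - 1) ^ m) / 2 := by
  have e := even_sum (fun j => (j : ℝ) * wt (m + 1) t j) (m + 1)
  push_cast at e
  rw [e]
  have h1 := mean_sum m (1 - t) t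
  have h2 := mean_sum m (-(1 - t)) t
  rw [show 1 - t + t = 1 by ring, one_pow] at h1
  rw [show -(1 - t) + t = 2 * t - 1 by ring] at h2
  have h3 : (m + 1) * (1 - t) * (1 - (2 * t - 1) ^ m)
    = ((m : ℝ) + 1) * (1 - t) * 1 + (m + 1) * (-(1 - t)) * (2 * t - 1) ^ m := by ring
  rw [h3, ← h1, ← h2, ← Finset.sum_add_distrib, ← Finset.sum_div]
  congr 1
  refine Finset.sum_congr rfl fun j _ => ?_
  unfold wt; rw [neg_pow (1 - t)]; ring

lemma wt_nonneg (n : ℕ) (t : ℝ) (h0 : 0 ≤ t) (h1 : t ≤ 1) (j : ℕ) : 0 ≤ wt n t j := by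
  unfold wt
  have : 0 ≤ 1 - t := by linarith
  positivity

lemma cb_tangent (n : ℕ) (hn : 0 < n) (A : ℝ) (hA : 0 < A) (hA2 : A ^ 2 * (2 * π * n) = 1)
    (k : ℕ) : A * (3 - (2 * k + 1) / n) ≤ cb k := by
  have hn' : (0 : ℝ) < n := by exact_mod_cast hn
  have hpi := Real.pi_pos
  set u : ℝ := (2 * k + 1) / n with hu
  have hu0 : 0 < u := by positivity
  have hc := (cb_sq_ge k).le
  have h1 : 2 / (π * (2 * k + 1)) = 4 * A ^ 2 / u := by
    have : A ^ 2 = 1 / (2 * π * n) := by field_simp; linarith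
    rw [this, hu]; field_simp; norm_num
  rw [h1, div_le_iff₀ hu0] at hc
  by_cases h3 : 3 ≤ u
  · have := cb_pos k
    nlinarith
  · push Not at h3
    refine le_of_sq_le_sq ?_ (cb_pos k).le
    have h4 : (A * (3 - u)) ^ 2 * u ≤ 4 * A ^ 2 := by
      have : 0 ≤ A ^ 2 * ((1 - u) ^ 2 * (4 - u)) := by
        have : 0 ≤ 4 - u := by linarith
        positivity
      nlinarith
    exact le_of_mul_le_mul_right (h4.trans hc) hu0

lemma f_lower (m : ℕ) (t : ℝ) (h0 : 0 ≤ t) (h1 : t ≤ 1) (A : ℝ) (hA : 0 < A)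
    (hA2 : A ^ 2 * (2 * π * (m + 1 : ℕ)) = 1) :
    A * ((3 - 1 / (m + 1)) * ((1 + (2 * t - 1) ^ (m + 1)) / 2)
      - (1 - t) * (1 - (2 * t - 1) ^ m) / 2) ≤ f (m + 1) t := by
  have key : ∑ k ∈ Finset.range ((m + 1) / 2 + 1),
      (A * (3 - (2 * k + 1) / (m + 1 : ℕ))) * wt (m + 1) t (2 * k) ≤ f (m + 1) t := by
    rw [f_eq]
    refine Finset.sum_le_sum fun k _ => ?_
    exact mul_le_mul_of_nonneg_right (cb_tangent (m + 1) (by omega) A hA hA2 k)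
      (wt_nonneg _ _ h0 h1 _)
  refine le_trans (le_of_eq ?_) key
  have e : ∑ k ∈ Finset.range ((m + 1) / 2 + 1),
      (A * (3 - (2 * k + 1) / (m + 1 : ℕ))) * wt (m + 1) t (2 * k)
      = A * (3 - 1 / (m + 1)) * (∑ k ∈ Finset.range ((m + 1) / 2 + 1), wt (m + 1) t (2 * k))
       - A / (m + 1) * ∑ k ∈ Finset.range ((m + 1) / 2 + 1), (2 * (k : ℝ)) * wt (m + 1) t (2 * k)
      := by
    rw [Finset.mul_sum, Finset.mul_sum, ← Finset.sum_sub_distrib]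
    refine Finset.sum_congr rfl fun k _ => ?_
    push_cast
    ring
  rw [e, wt_sum, wt_mean]
  field_simp

lemma f_upper (n : ℕ) (hn : 3 ≤ n) : f n (3 / 4) < 3 / 4 := by
  have h : f n (3 / 4) ≤ ∑ k ∈ Finset.range (n / 2 + 1), wt n (3 / 4) (2 * k) := by
    rw [f_eq]
    refine Finset.sum_le_sum fun k _ => ?_
    have := cb_le_one k
    have := wt_nonneg n (3 / 4) (by norm_num) (by norm_num) (2 * k)
    nlinarith
  rw [wt_sum] at h
  have h2 : ((2 : ℝ) * (3 / 4) - 1) ^ n ≤ (1 / 2) ^ 3 := by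
    rw [show (2 : ℝ) * (3 / 4) - 1 = 1 / 2 by norm_num]
    exact pow_le_pow_of_le_one (by norm_num) (by norm_num) hn
  norm_num at h2 h ⊢
  linarith

/-- the exponentially small parity error -/
lemma small_q (m : ℕ) (hm : 535 ≤ m) (t : ℝ) (h0 : 0 < t) (h1 : t ≤ 1 / 2)
    (ht : 1 ≤ 7 * (m + 1) * t ^ 2) : 1 + 4 * (m + 1) * (1 - 2 * t) ^ m ≤ (m + 1) * t := by
  have hm' : (535 : ℝ) ≤ m := by exact_mod_cast hm
  set s : ℝ := 2 * t * m with hs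
  have hs0 : 0 < s := by positivity
  have hq : (1 - 2 * t) ^ m ≤ Real.exp (-s) := by
    have : 1 - 2 * t ≤ Real.exp (-(2 * t)) := by
      have := Real.add_one_le_exp (-(2 * t)); linarith
    calc (1 - 2 * t) ^ m ≤ Real.exp (-(2 * t)) ^ m :=
          pow_le_pow_left₀ (by linarith) this m
      _ = Real.exp (-s) := by rw [← Real.exp_nat_mul]; congr 1; rw [hs]; ring
  have he : s ^ 4 / 24 ≤ Real.exp s := by
    have := Real.pow_div_factorial_le_exp s hs0.le 4
    norm_num [Nat.factorial] at this
    exact this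
  have hmt : 8 ≤ ((m : ℝ) + 1) * t := by
    have : (8 : ℝ) ^ 2 ≤ (((m : ℝ) + 1) * t) ^ 2 := by nlinarith
    exact le_of_sq_le_sq this (by positivity)
  have hs2 : (m : ℝ) / 2 ≤ s ^ 2 := by
    have e : s ^ 2 * (7 * (m + 1)) = 4 * m ^ 2 * (7 * (m + 1) * t ^ 2) := by rw [hs]; ring
    have : 4 * (m : ℝ) ^ 2 ≤ s ^ 2 * (7 * (m + 1)) := by
      rw [e]; nlinarith [sq_nonneg (m : ℝ)]
    by_contra hc
    push Not at hc
    nlinarith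
  have hs4 : (m : ℝ) ^ 2 / 4 ≤ s ^ 4 := by nlinarith
  have hexp : (m : ℝ) ^ 2 / 96 ≤ Real.exp s := by linarith
  have h5 : 4 * ((m : ℝ) + 1) * (1 - 2 * t) ^ m ≤ 7 := by
    have h6 : 4 * ((m : ℝ) + 1) ≤ 7 * Real.exp s := by nlinarith
    have h7 : Real.exp s * Real.exp (-s) = 1 := by rw [← Real.exp_add]; simp
    have h8 := Real.exp_pos (-s)
    calc 4 * ((m : ℝ) + 1) * (1 - 2 * t) ^ m ≤ 4 * ((m : ℝ) + 1) * Real.exp (-s) :=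
          mul_le_mul_of_nonneg_left hq (by positivity)
      _ ≤ 7 * Real.exp s * Real.exp (-s) := mul_le_mul_of_nonneg_right h6 h8.le
      _ = 7 := by rw [mul_assoc, h7]; norm_num
  linarith

theorem stmt_10 (n : ℕ) (hn : 536 ≤ n) (α : ℝ)
    (hα : α ∈ Set.Ioo (0 : ℝ) 1) (hfix : f n α = α)
    (huniq : ∀ t ∈ Set.Ioo (0 : ℝ) 1, f n t = t → t = α) :
    1 / Real.sqrt (2 * π * (n + 1 / 4)) < ((4 * n).choose (2 * n) : ℝ) / 2 ^ (4 * n) ∧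
      ((4 * n).choose (2 * n) : ℝ) / 2 ^ (4 * n) ≤ α := by
  have hpi := Real.pi_pos
  have hxi : ((4 * n).choose (2 * n) : ℝ) / 2 ^ (4 * n) = cb (2 * n) := by
    unfold cb
    rw [show 2 * (2 * n) = 4 * n by ring, show 4 * n = 2 * (2 * n) by ring, pow_mul 2 2]
    norm_num
  rw [hxi]
  have hlow := cb_sq_ge (2 * n)
  have hup := cb_sq_le (2 * n) (by omega)
  have hpos := cb_pos (2 * n)
  push_cast at hlow hup
  constructor
  · refine lt_of_pow_lt_pow_left₀ 2 hpos.le ?_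
    rw [div_pow, Real.sq_sqrt (by positivity), one_pow]
    refine lt_of_le_of_lt (le_of_eq ?_) hlow
    field_simp
    ring
  · obtain ⟨m, rfl⟩ : ∃ m, n = m + 1 := ⟨n - 1, by omega⟩
    have hm : 535 ≤ m := by omega
    have hm' : (535 : ℝ) ≤ m := by exact_mod_cast hm
    clear hxi hn
    generalize cb (2 * (m + 1)) = t at *
    push_cast at hlow hup
    have ht2 : t ≤ 1 / 2 := by
      have : t ^ 2 ≤ (1 / 2) ^ 2 := by
        refine hup.trans ?_
        rw [div_le_iff₀ (by positivity)]
        nlinarith [Real.pi_gt_three]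
      exact le_of_sq_le_sq this (by norm_num)
    have ht7 : 1 ≤ 7 * ((m : ℝ) + 1) * t ^ 2 := by
      rw [div_lt_iff₀ (by positivity)] at hlow
      have h315 := Real.pi_lt_d2
      have : π * (2 * (2 * ((m : ℝ) + 1)) + 1) ≤ 14 * (m + 1) := by nlinarith
      have := mul_le_mul_of_nonneg_left this (sq_nonneg t)
      linarith
    have hq := small_q m hm t hpos ht2 ht7
    -- the scale A
    set A : ℝ := 1 / Real.sqrt (2 * π * (m + 1 : ℕ)) with hAdef
    have hA : 0 < A := by positivity
    have hA2 : A ^ 2 * (2 * π * (m + 1 : ℕ)) = 1 := by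
      rw [hAdef, div_pow, Real.sq_sqrt (by positivity)]
      field_simp
    have htA : t ≤ A := by
      refine le_of_sq_le_sq (hup.trans (le_of_eq ?_)) hA.le
      rw [hAdef, div_pow, Real.sq_sqrt (by positivity)]
      push_cast
      rw [one_pow]
      congr 1
      ring
    have hf := f_lower m t hpos.le (by linarith) A hA hA2
    have hbr : 1 ≤ (3 - 1 / ((m : ℝ) + 1)) * ((1 + (2 * t - 1) ^ (m + 1)) / 2)
      - (1 - t) * (1 - (2 * t - 1) ^ m) / 2 := by
      have habs : |(2 * t - 1) ^ m| = (1 - 2 * t) ^ m := by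
        rw [abs_pow, abs_of_nonpos (by linarith)]
        congr 1; ring
      set Q := (1 - 2 * t) ^ m with hQ
      have hQ0 : 0 ≤ Q := by rw [← habs]; exact abs_nonneg _
      set q := (2 * t - 1) ^ m with hqd
      have hq1 : -Q ≤ q := by rw [← habs]; exact neg_abs_le q
      have hq2 : q ≤ Q := by rw [← habs]; exact le_abs_self q
      set v := 1 / ((m : ℝ) + 1) with hv
      have hv0 : 0 < v := by positivity
      have hv1 : v ≤ 1 := by rw [hv, div_le_one (by positivity)]; linarith
      have hq' : v + 4 * Q ≤ t := by
        have := mul_le_mul_of_nonneg_left hq hv0.le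
        have e1 : v * (m + 1) = 1 := by rw [hv]; field_simp
        have e2 : v * (1 + 4 * (m + 1) * Q) = v + 4 * Q * (v * (m + 1)) := by ring
        have e3 : v * ((m + 1) * t) = v * (m + 1) * t := by ring
        rw [e2, e3, e1] at this
        linarith
      rw [pow_succ, ← hqd]
      have hC : |(3 - v) * (2 * t - 1) + (1 - t)| ≤ 4 := by
        rw [abs_le]; constructor <;> nlinarith
      have hqC : -(4 * Q) ≤ q * ((3 - v) * (2 * t - 1) + (1 - t)) := by
        have := neg_abs_le (q * ((3 - v) * (2 * t - 1) + (1 - t)))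
        rw [abs_mul, habs] at this
        nlinarith
      nlinarith
    have hft : t ≤ f (m + 1) t := by
      refine le_trans ?_ hf
      nlinarith
    have hc : ContinuousOn (fun x => f (m + 1) x - x) (Set.Icc t (3 / 4)) :=
      ((f_cont _).sub continuous_id).continuousOn
    have hu := f_upper (m + 1) (by omega)
    have := intermediate_value_Icc' (by linarith) hc
    obtain ⟨x, hx, hx0⟩ := this (show (0 : ℝ) ∈ _ from ⟨by linarith, by linarith⟩)
    have hxe : f (m + 1) x = x := by simpa [sub_eq_zero] using hx0
    rw [← huniq x ⟨by linarith [hx.1], by linarith [hx.2]⟩ hxe]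
    exact hx.1
end
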